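/- arXiv:1206.0411 — 2 statements merged into one kernel-verified Lean document; each statement's English description precedes it below -/
import Mathlib

section
/- The set O has cardinality q^3 + 1 and is invariant under the right action of Ree(q) on P^6(F_q); Ree(q) acts faithfully and doubly transitively on O; the stabilizer in Ree(q) of P∞ is U(q)H(q) = {u·h : u ∈ U(q), h ∈ H(q)}, the stabilizer of P0 is the conjugate (U(q)H(q))^Υ, and the stabilizer of the ordered pair (P∞, P0) is H(q). -/
open Matrix

noncomputable section

namespace ReePaper

variable {F : Type*} [Field F] [Fintype F]

/-- The matrix `α(x)`. -/
def amat (t : ℕ) (x : F) : Matrix (Fin 7) (Fin 7) F :=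
  !![1, x^t, 0, 0, -x^(3*t+1), -x^(3*t+2), x^(4*t+2);
     0, 1, x, x^(t+1), -x^(2*t+1), 0, -x^(3*t+2);
     0, 0, 1, x^t, -x^(2*t), 0, x^(3*t+1);
     0, 0, 0, 1, x^t, 0, 0;
     0, 0, 0, 0, 1, -x, x^(t+1);
     0, 0, 0, 0, 0, 1, -x^t;
     0, 0, 0, 0, 0, 0, 1]

/-- The matrix `β(x)`. -/
def bmat (t : ℕ) (x : F) : Matrix (Fin 7) (Fin 7) F :=
  !![1, 0, -x^t, 0, -x, 0, -x^(t+1);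
     0, 1, 0, x^t, 0, -x^(2*t), 0;
     0, 0, 1, 0, 0, 0, x;
     0, 0, 0, 1, 0, x^t, 0;
     0, 0, 0, 0, 1, 0, x^t;
     0, 0, 0, 0, 0, 1, 0;
     0, 0, 0, 0, 0, 0, 1]

/-- The matrix `γ(x)`. -/
def cmat (t : ℕ) (x : F) : Matrix (Fin 7) (Fin 7) F :=
  !![1, 0, 0, -x^t, 0, -x, -x^(2*t);
     0, 1, 0, 0, -x^t, 0, x;
     0, 0, 1, 0, 0, x^t, 0;
     0, 0, 0, 1, 0, 0, -x^t;
     0, 0, 0, 0, 1, 0, 0;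
     0, 0, 0, 0, 0, 1, 0;
     0, 0, 0, 0, 0, 0, 1]

/-- The diagonal matrix `h(λ)`. -/
def hmat (t : ℕ) (l : Fˣ) : Matrix (Fin 7) (Fin 7) F :=
  Matrix.diagonal ![((l ^ (t : ℤ) : Fˣ) : F), ((l ^ (1 - (t : ℤ)) : Fˣ) : F),
    ((l ^ (2 * (t : ℤ) - 1) : Fˣ) : F), 1, ((l ^ (1 - 2 * (t : ℤ)) : Fˣ) : F),
    ((l ^ ((t : ℤ) - 1) : Fˣ) : F), ((l ^ (-(t : ℤ)) : Fˣ) : F)]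

/-- The matrix `Υ`, the antidiagonal matrix with all entries `-1`. -/
def ups : Matrix (Fin 7) (Fin 7) F :=
  !![0, 0, 0, 0, 0, 0, -1;
     0, 0, 0, 0, 0, -1, 0;
     0, 0, 0, 0, -1, 0, 0;
     0, 0, 0, -1, 0, 0, 0;
     0, 0, -1, 0, 0, 0, 0;
     0, -1, 0, 0, 0, 0, 0;
     -1, 0, 0, 0, 0, 0, 0]

/-- `S(a, b, c) = α(a) β(b) γ(c)`. -/
def Smat (t : ℕ) (a b c : F) : Matrix (Fin 7) (Fin 7) F :=
  amat t a * bmat t b * cmat t c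

/-- The Ree group `Ree(q) = ⟨α(x), β(x), γ(x), h(λ), Υ⟩ ≤ GL(7, q)`. -/
def ReeGroup (t : ℕ) : Subgroup (GL (Fin 7) F) :=
  Subgroup.closure {g : GL (Fin 7) F |
    (∃ x : F, (g : Matrix (Fin 7) (Fin 7) F) = amat t x) ∨
    (∃ x : F, (g : Matrix (Fin 7) (Fin 7) F) = bmat t x) ∨
    (∃ x : F, (g : Matrix (Fin 7) (Fin 7) F) = cmat t x) ∨
    (∃ l : Fˣ, (g : Matrix (Fin 7) (Fin 7) F) = hmat t l) ∨
    (g : Matrix (Fin 7) (Fin 7) F) = ups}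

/-- The subgroup `U(q) = ⟨α(x), β(x), γ(x)⟩`. -/
def Usub (t : ℕ) : Subgroup (GL (Fin 7) F) :=
  Subgroup.closure {g : GL (Fin 7) F |
    (∃ x : F, (g : Matrix (Fin 7) (Fin 7) F) = amat t x) ∨
    (∃ x : F, (g : Matrix (Fin 7) (Fin 7) F) = bmat t x) ∨
    (∃ x : F, (g : Matrix (Fin 7) (Fin 7) F) = cmat t x)}

/-- The subgroup `H(q) = {h(λ) : λ ∈ F_q^×}`. -/
def Hsub (t : ℕ) : Subgroup (GL (Fin 7) F) :=
  Subgroup.closure {g : GL (Fin 7) F |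
    ∃ l : Fˣ, (g : Matrix (Fin 7) (Fin 7) F) = hmat t l}

/-- The right action of an element of `GL(7, F)` on the projective space `P^6(F)`
of the row vector space `F^7`. -/
def ptAct (g : GL (Fin 7) F) (P : Projectivization F (Fin 7 → F)) :
    Projectivization F (Fin 7 → F) :=
  Projectivization.map (Matrix.vecMulLinear (g : Matrix (Fin 7) (Fin 7) F))
    (by
      intro u v huv
      simp only [Matrix.vecMulLinear_apply] at huv
      have h2 : u ᵥ* ((g : Matrix (Fin 7) (Fin 7) F) * ((g⁻¹ : GL (Fin 7) F) : Matrix (Fin 7) (Fin 7) F))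
          = v ᵥ* ((g : Matrix (Fin 7) (Fin 7) F) * ((g⁻¹ : GL (Fin 7) F) : Matrix (Fin 7) (Fin 7) F)) := by
        rw [← Matrix.vecMul_vecMul, ← Matrix.vecMul_vecMul, huv]
      rwa [g.mul_inv, Matrix.vecMul_one, Matrix.vecMul_one] at h2) P

/-- The point `P∞ = (0 : 0 : 0 : 0 : 0 : 0 : 1)`. -/
def Pinf : Projectivization F (Fin 7 → F) :=
  Projectivization.mk F ![0, 0, 0, 0, 0, 0, 1]
    (by
      intro h
      have h1 : (1 : F) = 0 := by
        have := congrFun h 6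
        rwa [show (![0, 0, 0, 0, 0, 0, 1] : Fin 7 → F) 6 = 1 from rfl] at this
      exact one_ne_zero h1)

/-- The point `P0 = (1 : 0 : 0 : 0 : 0 : 0 : 0)`. -/
def Pzero : Projectivization F (Fin 7 → F) :=
  Projectivization.mk F ![1, 0, 0, 0, 0, 0, 0]
    (by intro h; have := congrFun h 0; simp at this)

/-- The representative vector of the point of `O` with parameters `a, b, c`. -/
def oVec (t : ℕ) (a b c : F) : Fin 7 → F :=
  ![1, a^t, -b^t, (a*b)^t - c^t, -b - a^(3*t+1) - (a*c)^t,
    -c - (b*c)^t - a^(3*t+2) - a^t * b^(2*t),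
    a^t * c - b^(t+1) + a^(4*t+2) - c^(2*t) - a^(3*t+1) * b^t - (a*b*c)^t]

lemma oVec_ne_zero (t : ℕ) (a b c : F) : oVec t a b c ≠ 0 := by
  intro h
  have h1 : (1 : F) = 0 := by
    have := congrFun h 0
    rwa [show oVec t a b c 0 = 1 from rfl] at this
  exact one_ne_zero h1

/-- The set `O ⊆ P^6(F_q)` on which `Ree(q)` acts doubly transitively. -/
def Oset (t : ℕ) : Set (Projectivization F (Fin 7 → F)) :=
  {Pinf} ∪ {P | ∃ a b c : F, P = Projectivization.mk F (oVec t a b c) (oVec_ne_zero t a b c)}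

end ReePaper

open ReePaper

/-!
In characteristic `3` the split Cayley hexagon, whose points are the totally isotropic points for
the quadratic form of the trace-zero octonions, is isomorphic to its dual through suitable Plücker
coordinates of its lines. Twisting this duality by a square root `φ` of the Frobenius map gives a
polarity. Every generator of `Ree(q)` commutes with it, and `O` is exactly its set of absolute
points; hence `O` is invariant. Since `S(a, b, c)` moves `P₀` to the point of `O` with parameters
`a, b, c`, the group `U(q)`, which fixes `P∞`, is transitive on `O ∖ {P∞}`; as `Υ` swaps `P∞` and
`P₀`, the action is doubly transitive. A matrix that commutes with the polarity and fixes `P∞` and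
`P₀` has its first and last rows determined up to scalars, and the octonion product and the
polarity then determine all the other rows, leaving only the matrices `h(λ)`.
-/

namespace ReePaper

section CrossProduct

variable {R : Type*} [CommRing R]

/-- The Plücker coordinate `p i j` of the line spanned by `v` and `w`. -/
def plucker (v w : Fin 7 → R) (i j : Fin 7) : R := v i * w j - v j * w i

/-- The alternating product on `R⁷` preserved by the group of type `G₂`, as the product of
trace-zero octonions. The lines `⟨v, w⟩` with `cross v w = 0` are the lines of the split Cayley
hexagon. -/
def cross (v w : Fin 7 → R) : Fin 7 → R :=
  let p := plucker v w
  ![p 1 2 - p 0 3, p 1 3 + p 0 4, p 2 3 - p 0 5, p 1 5 + p 2 4 - p 0 6, p 3 4 - p 1 6,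
    p 3 5 + p 2 6, p 4 5 - p 3 6]

/-- The seven Plücker coordinates of a hexagon line which, in characteristic `3`, identify the
dual of the split Cayley hexagon with the hexagon itself. -/
def lineCoord (v w : Fin 7 → R) : Fin 7 → R :=
  let p := plucker v w
  ![p 0 1, p 0 2, -p 1 4, p 0 6 + p 1 5, -p 2 5, p 4 6, p 5 6]

lemma cross_eq_zero_iff {v w : Fin 7 → R} : cross v w = 0 ↔
    let p := plucker v w
    p 1 2 = p 0 3 ∧ p 1 3 + p 0 4 = 0 ∧ p 2 3 = p 0 5 ∧ p 1 5 + p 2 4 = p 0 6 ∧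
      p 3 4 = p 1 6 ∧ p 3 5 + p 2 6 = 0 ∧ p 4 5 = p 3 6 := by
  simp [cross, funext_iff, Fin.forall_fin_succ, sub_eq_zero]

lemma plucker_sub_smul_right (k : R) (v w : Fin 7 → R) : plucker v (w - k • v) = plucker v w := by
  ext i j
  simp only [plucker, Pi.sub_apply, Pi.smul_apply, smul_eq_mul]
  ring

lemma plucker_smul_smul (k l : R) (v w : Fin 7 → R) (i j : Fin 7) :
    plucker (k • v) (l • w) i j = k * l * plucker v w i j := by
  simp only [plucker, Pi.smul_apply, smul_eq_mul]
  ring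

lemma cross_sub_smul_right (k : R) (v w : Fin 7 → R) : cross v (w - k • v) = cross v w := by
  simp only [cross, plucker_sub_smul_right]

lemma lineCoord_sub_smul_right (k : R) (v w : Fin 7 → R) :
    lineCoord v (w - k • v) = lineCoord v w := by
  simp only [lineCoord, plucker_sub_smul_right]

lemma cross_smul_smul (k l : R) (v w : Fin 7 → R) :
    cross (k • v) (l • w) = (k * l) • cross v w := by
  ext i
  fin_cases i <;> simp [cross, plucker_smul_smul] <;> ring

lemma lineCoord_smul_smul (k l : R) (v w : Fin 7 → R) :
    lineCoord (k • v) (l • w) = (k * l) • lineCoord v w := by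
  ext i
  fin_cases i <;> simp [lineCoord, plucker_smul_smul, mul_add]

lemma cross_single_zero_left (a : R) (w : Fin 7 → R) :
    cross (Pi.single 0 a) w = ![-(a * w 3), a * w 4, -(a * w 5), -(a * w 6), 0, 0, 0] := by
  ext i
  fin_cases i <;> simp [cross, plucker]

lemma lineCoord_single_zero_left (a : R) (w : Fin 7 → R) :
    lineCoord (Pi.single 0 a) w = ![a * w 1, a * w 2, 0, a * w 6, 0, 0, 0] := by
  ext i
  fin_cases i <;> simp [lineCoord, plucker]

lemma cross_single_three_right (v : Fin 7 → R) (a : R) :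
    cross v (Pi.single 3 a) =
      ![-(v 0 * a), v 1 * a, v 2 * a, 0, -(v 4 * a), -(v 5 * a), v 6 * a] := by
  ext i
  fin_cases i <;> simp [cross, plucker]

end CrossProduct

section Polarity

variable {F : Type*} [Field F]

/-- `φ` is a Tits endomorphism of `F`, that is, a square root of the Frobenius map `x ↦ x ^ 3`,
and `x ↦ x ^ t` is its inverse. -/
structure IsTitsEndo (t : ℕ) (φ : F →+* F) : Prop where
  apply_eq (x : F) : φ x = (x ^ t) ^ 3
  apply_pow (x : F) : φ (x ^ t) = x

lemma IsTitsEndo.apply_pow_eq {t : ℕ} {φ : F →+* F} (hφ : IsTitsEndo t φ) (x : F) :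
    φ x ^ t = x := by
  rw [← map_pow, hφ.apply_pow]

lemma IsTitsEndo.apply_apply {t : ℕ} {φ : F →+* F} (hφ : IsTitsEndo t φ) (x : F) :
    φ (φ x) = x ^ 3 := by
  rw [hφ.apply_eq x, map_pow, hφ.apply_pow]

lemma IsTitsEndo.ne_zero {t : ℕ} {φ : F →+* F} (hφ : IsTitsEndo t φ) : t ≠ 0 := by
  rintro rfl
  simpa using hφ.apply_pow 0

/-- `M` preserves `cross` and commutes with the polarity of the split Cayley hexagon that sends a
point `v` to the line with coordinates `φ v`. -/
structure CommutesWithPolarity (φ : F →+* F) (M : Matrix (Fin 7) (Fin 7) F) : Prop where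
  cross_vecMul (v w : Fin 7 → F) : cross (v ᵥ* M) (w ᵥ* M) = cross v w ᵥ* M
  lineCoord_vecMul {v w : Fin 7 → F} : cross v w = 0 →
    lineCoord (v ᵥ* M) (w ᵥ* M) = lineCoord v w ᵥ* M.map φ

lemma CommutesWithPolarity.one (φ : F →+* F) : CommutesWithPolarity φ 1 where
  cross_vecMul v w := by simp only [vecMul_one]
  lineCoord_vecMul _ := by simp only [vecMul_one, Matrix.map_one φ (map_zero φ) (map_one φ)]

lemma CommutesWithPolarity.mul {φ : F →+* F} {M N : Matrix (Fin 7) (Fin 7) F}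
    (hM : CommutesWithPolarity φ M) (hN : CommutesWithPolarity φ N) :
    CommutesWithPolarity φ (M * N) where
  cross_vecMul v w := by
    simp only [← vecMul_vecMul, hN.cross_vecMul, hM.cross_vecMul]
  lineCoord_vecMul {v w} hvw := by
    have hvwM : cross (v ᵥ* M) (w ᵥ* M) = 0 := by rw [hM.cross_vecMul, hvw, zero_vecMul]
    rw [← vecMul_vecMul, ← vecMul_vecMul, hN.lineCoord_vecMul hvwM, hM.lineCoord_vecMul hvw,
      Matrix.map_mul, vecMul_vecMul]

lemma CommutesWithPolarity.of_mul_eq_one {φ : F →+* F} {M N : Matrix (Fin 7) (Fin 7) F}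
    (hM : CommutesWithPolarity φ M) (hNM : N * M = 1) : CommutesWithPolarity φ N := by
  have hMN : M * N = 1 := mul_eq_one_comm.mp hNM
  have vecMul_inv_cancel (v : Fin 7 → F) : (v ᵥ* N) ᵥ* M = v := by
    rw [vecMul_vecMul, hNM, vecMul_one]
  have cross_vecMul (v w : Fin 7 → F) : cross (v ᵥ* N) (w ᵥ* N) = cross v w ᵥ* N := by
    have h := hM.cross_vecMul (v ᵥ* N) (w ᵥ* N)
    rw [vecMul_inv_cancel, vecMul_inv_cancel] at h
    rw [h, vecMul_vecMul, hMN, vecMul_one]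
  refine ⟨cross_vecMul, fun {v w} hvw => ?_⟩
  have h := hM.lineCoord_vecMul (v := v ᵥ* N) (w := w ᵥ* N) (by rw [cross_vecMul, hvw, zero_vecMul])
  rw [vecMul_inv_cancel, vecMul_inv_cancel] at h
  rw [h, vecMul_vecMul, ← Matrix.map_mul, hMN, Matrix.map_one φ (map_zero φ) (map_one φ),
    vecMul_one]

/-- The centralizer of the polarity in `GL(7, F)`. -/
def polarityCentralizer (φ : F →+* F) : Subgroup (GL (Fin 7) F) where
  carrier := {g | CommutesWithPolarity φ g}
  one_mem' := .one φ
  mul_mem' := .mul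
  inv_mem' {g} hg := hg.of_mul_eq_one g.inv_mul

/-- The point `v` lies on its polar line. -/
def IsAbsolute (φ : F →+* F) (v : Fin 7 → F) : Prop :=
  ∃ w, cross v w = 0 ∧ lineCoord v w = φ ∘ v

lemma IsAbsolute.vecMul {φ : F →+* F} {M : Matrix (Fin 7) (Fin 7) F} {v : Fin 7 → F}
    (hv : IsAbsolute φ v) (hM : CommutesWithPolarity φ M) : IsAbsolute φ (v ᵥ* M) := by
  obtain ⟨w, hvw, hline⟩ := hv
  refine ⟨w ᵥ* M, by rw [hM.cross_vecMul, hvw, zero_vecMul], ?_⟩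
  rw [hM.lineCoord_vecMul hvw, hline]
  ext i
  exact (RingHom.map_vecMul φ M v i).symm

lemma IsAbsolute.smul {φ : F →+* F} {v : Fin 7 → F} (hv : IsAbsolute φ v) {k : F} (hk : k ≠ 0) :
    IsAbsolute φ (k • v) := by
  obtain ⟨w, hvw, hline⟩ := hv
  refine ⟨(k⁻¹ * φ k) • w, by rw [cross_smul_smul, hvw, smul_zero], ?_⟩
  rw [lineCoord_smul_smul, hline, mul_inv_cancel_left₀ hk]
  ext i
  simp

lemma isAbsolute_single_zero (φ : F →+* F) : IsAbsolute φ (Pi.single 0 1) := by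
  refine ⟨Pi.single 1 1, by simp [cross_single_zero_left], ?_⟩
  rw [lineCoord_single_zero_left]
  ext i
  fin_cases i <;> simp

lemma isAbsolute_single_six (φ : F →+* F) : IsAbsolute φ (Pi.single 6 1) := by
  refine ⟨Pi.single 5 (-1), ?_, ?_⟩ <;> ext i <;> fin_cases i <;> simp [cross, lineCoord, plucker]

end Polarity

section Generators

variable {F : Type*} [Field F]

lemma vecMul_amat (t : ℕ) (x : F) (v : Fin 7 → F) : v ᵥ* amat t x =
    ![v 0, v 1 + v 0 * x ^ t, v 2 + v 1 * x, v 3 + v 1 * (x ^ t * x) + v 2 * x ^ t,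
      v 4 - v 0 * ((x ^ t) ^ 3 * x) - v 1 * ((x ^ t) ^ 2 * x) - v 2 * (x ^ t) ^ 2 + v 3 * x ^ t,
      v 5 - v 0 * ((x ^ t) ^ 3 * x ^ 2) - v 4 * x,
      v 6 + v 0 * ((x ^ t) ^ 4 * x ^ 2) - v 1 * ((x ^ t) ^ 3 * x ^ 2) + v 2 * ((x ^ t) ^ 3 * x)
        + v 4 * (x ^ t * x) - v 5 * x ^ t] := by
  ext i
  fin_cases i <;> simp [amat, vecMul, dotProduct, Fin.sum_univ_seven] <;> ring

lemma vecMul_bmat (t : ℕ) (x : F) (v : Fin 7 → F) : v ᵥ* bmat t x =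
    ![v 0, v 1, v 2 - v 0 * x ^ t, v 3 + v 1 * x ^ t, v 4 - v 0 * x,
      v 5 - v 1 * (x ^ t) ^ 2 + v 3 * x ^ t,
      v 6 - v 0 * (x ^ t * x) + v 2 * x + v 4 * x ^ t] := by
  ext i
  fin_cases i <;> simp [bmat, vecMul, dotProduct, Fin.sum_univ_seven] <;> ring

lemma vecMul_cmat (t : ℕ) (x : F) (v : Fin 7 → F) : v ᵥ* cmat t x =
    ![v 0, v 1, v 2, v 3 - v 0 * x ^ t, v 4 - v 1 * x ^ t, v 5 - v 0 * x + v 2 * x ^ t,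
      v 6 - v 0 * (x ^ t) ^ 2 + v 1 * x - v 3 * x ^ t] := by
  ext i
  fin_cases i <;> simp [cmat, vecMul, dotProduct, Fin.sum_univ_seven] <;> ring

lemma vecMul_ups (v : Fin 7 → F) : v ᵥ* ups = fun i => -v i.rev := by
  ext i
  fin_cases i <;> simp [ups, vecMul, dotProduct, Fin.sum_univ_seven]

lemma hmat_eq (t : ℕ) (l : Fˣ) : hmat t l = diagonal
    ![(l : F) ^ t, l / l ^ t, l ^ t * l ^ t / l, 1, l / (l ^ t * l ^ t), l ^ t / l,
      ((l : F) ^ t)⁻¹] := by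
  simp [hmat, _root_.zpow_sub, two_mul, _root_.zpow_add, div_eq_mul_inv]

lemma map_amat (φ : F →+* F) (t : ℕ) (x : F) : (amat t x).map φ = amat t (φ x) := by
  ext i j
  fin_cases i <;> fin_cases j <;> simp [amat]

lemma map_bmat (φ : F →+* F) (t : ℕ) (x : F) : (bmat t x).map φ = bmat t (φ x) := by
  ext i j
  fin_cases i <;> fin_cases j <;> simp [bmat]

lemma map_cmat (φ : F →+* F) (t : ℕ) (x : F) : (cmat t x).map φ = cmat t (φ x) := by
  ext i j
  fin_cases i <;> fin_cases j <;> simp [cmat]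

lemma map_hmat (φ : F →+* F) (t : ℕ) (l : Fˣ) :
    (hmat t l).map φ = hmat t (Units.map (φ : F →* F) l) := by
  rw [hmat, diagonal_map (map_zero φ), hmat]
  congr 1
  ext i
  fin_cases i <;> simp [Units.coe_map]

lemma map_ups (φ : F →+* F) : ups.map φ = ups := by
  ext i j
  fin_cases i <;> fin_cases j <;> simp [ups]

variable {t : ℕ} {φ : F →+* F}

section CharThree

variable [CharP F 3]

lemma commutesWithPolarity_amat (hφ : IsTitsEndo t φ) (x : F) :
    CommutesWithPolarity φ (amat t x) where
  cross_vecMul v w := by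
    rw [vecMul_amat t x (cross v w)]
    ext i
    fin_cases i <;> simp [cross, plucker, vecMul_amat] <;> grind
  lineCoord_vecMul {v w} hvw := by
    simp only [cross_eq_zero_iff, plucker] at hvw
    simp only [map_amat, vecMul_amat, hφ.apply_pow_eq]
    rw [hφ.apply_eq]
    ext i
    fin_cases i <;> simp [lineCoord, plucker] <;> grind

lemma commutesWithPolarity_bmat (hφ : IsTitsEndo t φ) (x : F) :
    CommutesWithPolarity φ (bmat t x) where
  cross_vecMul v w := by
    rw [vecMul_bmat t x (cross v w)]
    ext i
    fin_cases i <;> simp [cross, plucker, vecMul_bmat] <;> grind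
  lineCoord_vecMul {v w} hvw := by
    simp only [cross_eq_zero_iff, plucker] at hvw
    simp only [map_bmat, vecMul_bmat, hφ.apply_pow_eq]
    rw [hφ.apply_eq]
    ext i
    fin_cases i <;> simp [lineCoord, plucker] <;> grind

lemma commutesWithPolarity_cmat (hφ : IsTitsEndo t φ) (x : F) :
    CommutesWithPolarity φ (cmat t x) where
  cross_vecMul v w := by
    rw [vecMul_cmat t x (cross v w)]
    ext i
    fin_cases i <;> simp [cross, plucker, vecMul_cmat] <;> grind
  lineCoord_vecMul {v w} hvw := by
    simp only [cross_eq_zero_iff, plucker] at hvw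
    simp only [map_cmat, vecMul_cmat, hφ.apply_pow_eq]
    rw [hφ.apply_eq]
    ext i
    fin_cases i <;> simp [lineCoord, plucker] <;> grind

end CharThree

lemma commutesWithPolarity_hmat (hφ : IsTitsEndo t φ) (l : Fˣ) :
    CommutesWithPolarity φ (hmat t l) where
  cross_vecMul v w := by
    rw [hmat_eq]
    ext i
    fin_cases i <;> simp [cross, plucker, vecMul_diagonal] <;> field_simp
  lineCoord_vecMul _ := by
    rw [map_hmat, hmat_eq, hmat_eq]
    simp only [Units.coe_map, MonoidHom.coe_coe, hφ.apply_pow_eq]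
    rw [hφ.apply_eq]
    ext i
    fin_cases i <;> simp [lineCoord, plucker, vecMul_diagonal] <;> field_simp

lemma commutesWithPolarity_ups (φ : F →+* F) : CommutesWithPolarity φ ups where
  cross_vecMul v w := by
    rw [vecMul_ups (cross v w)]
    ext i
    fin_cases i <;> simp [cross, plucker, vecMul_ups] <;> grind
  lineCoord_vecMul _ := by
    simp only [map_ups, vecMul_ups]
    ext i
    fin_cases i <;> simp [lineCoord, plucker]
    ring

theorem reeGroup_le_polarityCentralizer [CharP F 3] (hφ : IsTitsEndo t φ) :
    ReeGroup t ≤ polarityCentralizer φ := by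
  rw [ReeGroup, Subgroup.closure_le]
  rintro g (⟨x, hg⟩ | ⟨x, hg⟩ | ⟨x, hg⟩ | ⟨l, hg⟩ | hg) <;>
    change CommutesWithPolarity φ (g : Matrix (Fin 7) (Fin 7) F) <;> rw [hg]
  · exact commutesWithPolarity_amat hφ x
  · exact commutesWithPolarity_bmat hφ x
  · exact commutesWithPolarity_cmat hφ x
  · exact commutesWithPolarity_hmat hφ l
  · exact commutesWithPolarity_ups φ

end Generators

section AbsolutePoints

variable {F : Type*} [Field F] {t : ℕ} {φ : F →+* F} {v w : Fin 7 → F}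

lemma lineCoord_eq_comp_iff : lineCoord v w = φ ∘ v ↔
    let p := plucker v w
    p 0 1 = φ (v 0) ∧ p 0 2 = φ (v 1) ∧ -p 1 4 = φ (v 2) ∧ p 0 6 + p 1 5 = φ (v 3) ∧
      -p 2 5 = φ (v 4) ∧ p 4 6 = φ (v 5) ∧ p 5 6 = φ (v 6) := by
  simp [lineCoord, funext_iff, Fin.forall_fin_succ]

lemma eq_zero_of_pow_mul_map_eq_zero {x : F} (n : ℕ) (h : x ^ n * φ x = 0) : x = 0 :=
  (mul_eq_zero.mp h).elim eq_zero_of_pow_eq_zero (map_eq_zero φ).mp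

lemma IsAbsolute.eq_single_six (hv : IsAbsolute φ v) (h0 : v 0 = 0) : v = Pi.single 6 (v 6) := by
  obtain ⟨w, hcross, hline⟩ := hv
  simp only [cross_eq_zero_iff, plucker] at hcross
  simp only [lineCoord_eq_comp_iff, plucker] at hline
  have h1 : v 1 = 0 := by
    refine eq_zero_of_pow_mul_map_eq_zero (φ := φ) 1 ?_
    grind
  have h2 : v 2 = 0 := by
    refine eq_zero_of_pow_mul_map_eq_zero (φ := φ) 2 ?_
    grind
  have h3 : v 3 = 0 := by
    refine eq_zero_of_pow_mul_map_eq_zero (φ := φ) 2 ?_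
    grind
  have h4 : v 4 = 0 := by
    refine eq_zero_of_pow_mul_map_eq_zero (φ := φ) 2 ?_
    grind
  have h5 : v 5 = 0 := by
    refine eq_zero_of_pow_mul_map_eq_zero (φ := φ) 3 ?_
    grind
  ext i
  fin_cases i <;> simp [h0, h1, h2, h3, h4, h5]

lemma IsAbsolute.apply_eq [CharP F 3] (hv : IsAbsolute φ v) (h0 : v 0 = 1) :
    let z₃ := v 1 * φ (v 1) - v 2
    let z₄ := v 3 - v 1 * z₃
    let z₅ := v 2 * z₃ - v 3 * φ (v 1)
    v 4 = φ (v 2) + v 1 * z₄ ∧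
      v 5 = φ (v 3) + v 1 * z₅ - v 2 * z₄ + v 4 * φ (v 1) ∧
      v 6 = v 1 * (φ (v 3) - v 1 * z₅ + v 5) - v 3 * z₄ + v 4 * z₃ := by
  obtain ⟨w, hcross, hline⟩ := hv
  -- Replace `w` by the point `z` of its line with `z 0 = 0`; its coordinates are the `zᵢ`.
  obtain ⟨z, hz⟩ : ∃ z, z = w - w 0 • v := ⟨_, rfl⟩
  have hz0 : z 0 = 0 := by simp [hz, h0]
  rw [← cross_sub_smul_right (w 0), ← hz] at hcross
  rw [← lineCoord_sub_smul_right (w 0), ← hz] at hline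
  simp only [cross_eq_zero_iff, plucker, h0, hz0, one_mul, mul_zero, sub_zero] at hcross
  simp only [lineCoord_eq_comp_iff, plucker, h0, hz0, map_one, one_mul, mul_zero, sub_zero] at hline
  obtain ⟨h12, h13, h23, h15, h34, -, -⟩ := hcross
  obtain ⟨hz1, hz2, hφ2, hφ3, -, -, -⟩ := hline
  intro z₃ z₄ z₅
  have hz3 : z 3 = z₃ := by rw [← h12, hz1, hz2, mul_one]
  have hz4 : z 4 = z₄ := by linear_combination h13 - v 1 * hz3 + v 3 * hz1
  have hz5 : z 5 = z₅ := by rw [← h23, hz3, hz2]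
  simp only [hz1, hz2, hz3, hz4, hz5] at h15 h34 hφ2 hφ3
  have h3 : (3 : F) = 0 := CharP.ofNat_eq_zero F 3
  refine ⟨?_, ?_, ?_⟩
  · linear_combination hφ2
  · linear_combination h15 + hφ3 + (v 5 - v 1 * z₅) * h3
  · linear_combination h34 + v 1 * hφ3

lemma IsAbsolute.ext [CharP F 3] (hv : IsAbsolute φ v) (hw : IsAbsolute φ w) (hv0 : v 0 = 1)
    (hw0 : w 0 = 1) (h1 : v 1 = w 1) (h2 : v 2 = w 2) (h3 : v 3 = w 3) : v = w := by
  obtain ⟨hv4, hv5, hv6⟩ := hv.apply_eq hv0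
  obtain ⟨hw4, hw5, hw6⟩ := hw.apply_eq hw0
  have h0 : v 0 = w 0 := hv0.trans hw0.symm
  have h4 : v 4 = w 4 := by rw [hv4, hw4, h1, h2, h3]
  have h5 : v 5 = w 5 := by rw [hv5, hw5, h1, h2, h3, h4]
  have h6 : v 6 = w 6 := by rw [hv6, hw6, h1, h2, h3, h4, h5]
  ext i
  fin_cases i <;> assumption

lemma single_zero_vecMul_Smat (t : ℕ) (a b c : F) :
    Pi.single 0 1 ᵥ* Smat t a b c = oVec t a b c := by
  rw [Smat, ← vecMul_vecMul, ← vecMul_vecMul, vecMul_cmat, vecMul_bmat, vecMul_amat]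
  ext i
  fin_cases i <;> simp [oVec] <;> ring

variable [CharP F 3]

lemma isAbsolute_oVec (hφ : IsTitsEndo t φ) (a b c : F) : IsAbsolute φ (oVec t a b c) := by
  rw [← single_zero_vecMul_Smat]
  exact (isAbsolute_single_zero φ).vecMul (((commutesWithPolarity_amat hφ a).mul
    (commutesWithPolarity_bmat hφ b)).mul (commutesWithPolarity_cmat hφ c))

lemma IsAbsolute.exists_eq_oVec (hφ : IsTitsEndo t φ) (hv : IsAbsolute φ v) (h0 : v 0 = 1) :
    ∃ a b c, v = oVec t a b c := by
  refine ⟨φ (v 1), -φ (v 2), φ (-(v 1 * v 2) - v 3),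
    hv.ext (isAbsolute_oVec hφ _ _ _) h0 rfl ?_ ?_ ?_⟩
  · simp [oVec, hφ.apply_pow_eq]
  · simp [oVec, ← map_neg, hφ.apply_pow_eq]
  · simp [oVec, mul_pow, ← map_neg, -map_sub, hφ.apply_pow_eq]

end AbsolutePoints

section Ovoid

variable {F : Type*} [Field F]
variable {t : ℕ} {φ : F →+* F} {v : Fin 7 → F}

lemma single_zero_eq : (Pi.single 0 1 : Fin 7 → F) = ![1, 0, 0, 0, 0, 0, 0] := by
  ext i
  fin_cases i <;> rfl

lemma single_six_eq : (Pi.single 6 1 : Fin 7 → F) = ![0, 0, 0, 0, 0, 0, 1] := by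
  ext i
  fin_cases i <;> rfl

lemma Pzero_eq_mk_single : (Pzero : Projectivization F (Fin 7 → F)) =
    .mk F (Pi.single 0 1) (Pi.single_ne_zero_iff.mpr one_ne_zero) := by
  simp only [Pzero, single_zero_eq]

lemma Pinf_eq_mk_single : (Pinf : Projectivization F (Fin 7 → F)) =
    .mk F (Pi.single 6 1) (Pi.single_ne_zero_iff.mpr one_ne_zero) := by
  simp only [Pinf, single_six_eq]

/-- The point of `O` with parameters `a, b, c`. -/
def oPoint (t : ℕ) (a b c : F) : Projectivization F (Fin 7 → F) :=
  .mk F (oVec t a b c) fun h => one_ne_zero (α := F) (congrFun h 0)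

lemma mem_Oset_iff [Fintype F] {P : Projectivization F (Fin 7 → F)} :
    P ∈ Oset t ↔ P = Pinf ∨ ∃ a b c, P = oPoint t a b c := Iff.rfl

lemma mk_mem_Oset_iff [Fintype F] [CharP F 3] (hφ : IsTitsEndo t φ) (hv : v ≠ 0) :
    Projectivization.mk F v hv ∈ Oset t ↔ IsAbsolute φ v := by
  rw [mem_Oset_iff, Pinf_eq_mk_single]
  constructor
  · rintro (h | ⟨a, b, c, h⟩) <;> obtain ⟨k, rfl⟩ := (Projectivization.mk_eq_mk_iff _ _ _ _ _).mp h
    · exact (isAbsolute_single_six φ).smul k.ne_zero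
    · exact (isAbsolute_oVec hφ a b c).smul k.ne_zero
  · intro h
    by_cases h0 : v 0 = 0
    · left
      refine (Projectivization.mk_eq_mk_iff' _ _ _ _ _).mpr ⟨v 6, ?_⟩
      rw [← Pi.single_smul, smul_eq_mul, mul_one, ← h.eq_single_six h0]
    · right
      obtain ⟨a, b, c, habc⟩ := (h.smul (inv_ne_zero h0)).exists_eq_oVec hφ (by simp [h0])
      exact ⟨a, b, c, (Projectivization.mk_eq_mk_iff' _ _ _ _ _).mpr
        ⟨v 0, by rw [← habc, smul_inv_smul₀ h0]⟩⟩

end Ovoid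

section Diagonal

variable {F : Type*} [Field F]

lemma cross_single_zero_three (a b : F) :
    cross (Pi.single 0 a) (Pi.single 3 b) = Pi.single 0 (-(a * b)) := by
  ext i
  fin_cases i <;> simp [cross, plucker]

lemma cross_single_zero_six (a b : F) :
    cross (Pi.single 0 a) (Pi.single 6 b) = Pi.single 3 (-(a * b)) := by
  ext i
  fin_cases i <;> simp [cross, plucker]

lemma cross_single_one_six (a b : F) :
    cross (Pi.single 1 a) (Pi.single 6 b) = Pi.single 4 (-(a * b)) := by
  ext i
  fin_cases i <;> simp [cross, plucker]

lemma cross_single_two_six (a b : F) :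
    cross (Pi.single 2 a) (Pi.single 6 b) = Pi.single 5 (a * b) := by
  ext i
  fin_cases i <;> simp [cross, plucker]

variable {φ : F →+* F} {M : Matrix (Fin 7) (Fin 7) F}

lemma CommutesWithPolarity.cross_row (hM : CommutesWithPolarity φ M) {i j k : Fin 7} {a : F}
    (h : cross (Pi.single i 1) (Pi.single j 1) = Pi.single k a) :
    cross (M.row i) (M.row j) = a • M.row k := by
  rw [← single_one_vecMul, ← single_one_vecMul, hM.cross_vecMul, h, single_vecMul]

lemma CommutesWithPolarity.lineCoord_row (hM : CommutesWithPolarity φ M) {i j k : Fin 7}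
    (hcross : cross (Pi.single i (1 : F)) (Pi.single j 1) = 0)
    (hline : lineCoord (Pi.single i (1 : F)) (Pi.single j 1) = Pi.single k 1) :
    lineCoord (M.row i) (M.row j) = φ ∘ M.row k := by
  rw [← single_one_vecMul, ← single_one_vecMul, hM.lineCoord_vecMul hcross, hline,
    single_one_vecMul]
  rfl

lemma eq_of_cross_single_zero_eq_zero [CharP F 3] {d : F} (hd : d ≠ 0) {v : Fin 7 → F}
    (h0 : cross (Pi.single 0 d) v = 0) (h3 : cross v (Pi.single 3 1) = v) :
    v = ![0, v 1, v 2, 0, 0, 0, 0] := by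
  rw [cross_single_zero_left] at h0
  rw [cross_single_three_right] at h3
  ext i
  have := congrFun h3 i
  have := congrFun h0 3
  fin_cases i <;> simp_all; grind

variable {t : ℕ} {d : Fˣ} {e : F}

lemma CommutesWithPolarity.row_three (hM : CommutesWithPolarity φ M)
    (h0 : M.row 0 = Pi.single 0 (d : F)) (h6 : M.row 6 = Pi.single 6 e) :
    M.row 3 = Pi.single 3 (d * e) := by
  have h := hM.cross_row (cross_single_zero_six 1 1)
  rw [h0, h6, cross_single_zero_six, mul_one, neg_one_smul, Pi.single_neg] at h
  exact (neg_injective h).symm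

lemma CommutesWithPolarity.mul_eq_one (hM : CommutesWithPolarity φ M)
    (h0 : M.row 0 = Pi.single 0 (d : F)) (h6 : M.row 6 = Pi.single 6 e) : d * e = 1 := by
  have h := hM.cross_row (cross_single_zero_three 1 1)
  rw [h0, hM.row_three h0 h6, cross_single_zero_three, mul_one, neg_one_smul, Pi.single_neg] at h
  exact d.isUnit.mul_eq_left.mp (Pi.single_injective 0 (neg_injective h))

lemma CommutesWithPolarity.row_eq [CharP F 3] (hM : CommutesWithPolarity φ M)
    (h0 : M.row 0 = Pi.single 0 (d : F)) (h3 : M.row 3 = Pi.single 3 1) {j : Fin 7}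
    (h0j : cross (Pi.single 0 (1 : F)) (Pi.single j 1) = 0)
    (hj3 : cross (Pi.single j (1 : F)) (Pi.single 3 1) = Pi.single j 1) :
    M.row j = ![0, M.row j 1, M.row j 2, 0, 0, 0, 0] := by
  refine eq_of_cross_single_zero_eq_zero d.ne_zero ?_ ?_
  · rw [← h0, hM.cross_row (k := 0) (h0j.trans (Pi.single_zero 0).symm), zero_smul]
  · rw [← h3, hM.cross_row hj3, one_smul]

lemma CommutesWithPolarity.row_one [CharP F 3] (hM : CommutesWithPolarity φ M)
    (h0 : M.row 0 = Pi.single 0 (d : F)) (h3 : M.row 3 = Pi.single 3 1) :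
    M.row 1 = Pi.single 1 (φ d / d) := by
  have h01 : cross (Pi.single 0 (1 : F)) (Pi.single 1 1) = 0 := by simp [cross_single_zero_left]
  have h13 : cross (Pi.single 1 (1 : F)) (Pi.single 3 1) = Pi.single 1 1 := by
    ext i
    fin_cases i <;> simp [cross_single_three_right]
  have hline := hM.lineCoord_row (k := 0) h01
    (by ext i; fin_cases i <;> simp [lineCoord_single_zero_left])
  rw [h0, lineCoord_single_zero_left] at hline
  have h1 : d * M.row 1 1 = φ d := by simpa using congrFun hline 0
  have h2 : M.row 1 2 = 0 := by simpa using congrFun hline 1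
  rw [hM.row_eq h0 h3 h01 h13, h2, ← h1, mul_div_cancel_left₀ _ d.ne_zero]
  ext i
  fin_cases i <;> rfl

lemma CommutesWithPolarity.row_two [CharP F 3] (hM : CommutesWithPolarity φ M)
    (h0 : M.row 0 = Pi.single 0 (d : F)) (h3 : M.row 3 = Pi.single 3 1) :
    M.row 2 = Pi.single 2 (φ (φ d / d) / d) := by
  have h02 : cross (Pi.single 0 (1 : F)) (Pi.single 2 1) = 0 := by simp [cross_single_zero_left]
  have h23 : cross (Pi.single 2 (1 : F)) (Pi.single 3 1) = Pi.single 2 1 := by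
    ext i
    fin_cases i <;> simp [cross_single_three_right]
  have hline := hM.lineCoord_row (k := 1) h02
    (by ext i; fin_cases i <;> simp [lineCoord_single_zero_left])
  rw [h0, hM.row_one h0 h3, lineCoord_single_zero_left] at hline
  have h1 : M.row 2 1 = 0 := by simpa using congrFun hline 0
  have h2 : d * M.row 2 2 = φ (φ d / d) := by simpa using congrFun hline 1
  rw [hM.row_eq h0 h3 h02 h23, h1, ← h2, mul_div_cancel_left₀ _ d.ne_zero]
  ext i
  fin_cases i <;> rfl

theorem CommutesWithPolarity.eq_hmat [CharP F 3] (hφ : IsTitsEndo t φ)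
    (hM : CommutesWithPolarity φ M) (h0 : M.row 0 = Pi.single 0 (d : F))
    (h6 : M.row 6 = Pi.single 6 e) : M = hmat t (Units.map φ d) := by
  have hde := hM.mul_eq_one h0 h6
  have he : e = (d : F)⁻¹ := eq_inv_of_mul_eq_one_right hde
  have h3 : M.row 3 = Pi.single 3 1 := by rw [hM.row_three h0 h6, hde]
  have h1 := hM.row_one h0 h3
  have h2 := hM.row_two h0 h3
  have h4 := hM.cross_row (cross_single_one_six 1 1)
  have h5 := hM.cross_row (cross_single_two_six 1 1)
  rw [h1, h6, cross_single_one_six, mul_one, neg_one_smul, Pi.single_neg, neg_inj] at h4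
  rw [h2, h6, cross_single_two_six, mul_one, one_smul] at h5
  have hd := d.ne_zero
  have hφd : φ d ≠ 0 := (map_ne_zero φ).mpr hd
  refine ext_row fun i => ?_
  rw [hmat_eq, row_diagonal]
  fin_cases i <;>
    simp [h0, h1, h2, h3, ← h4, ← h5, h6, he, hφ.apply_pow_eq, hφ.apply_apply] <;> field_simp

end Diagonal

section Subgroups

variable {F : Type*} [Field F] {t : ℕ}

lemma usub_le_reeGroup : Usub (F := F) t ≤ ReeGroup t :=
  Subgroup.closure_mono fun _ hg => hg.imp_right fun hg => hg.imp_right Or.inl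

lemma hsub_le_reeGroup : Hsub (F := F) t ≤ ReeGroup t :=
  Subgroup.closure_mono fun _ hg => Or.inr (Or.inr (Or.inr (Or.inl hg)))

lemma ups_mul_ups : (ups : Matrix (Fin 7) (Fin 7) F) * ups = 1 := by
  refine ext_row fun i => ?_
  rw [← single_one_vecMul, ← single_one_vecMul, ← vecMul_vecMul, vecMul_ups, vecMul_ups,
    vecMul_one]
  simp

/-- `Υ` as an element of `GL(7, F)`. -/
def upsGL : GL (Fin 7) F := ⟨ups, ups, ups_mul_ups, ups_mul_ups⟩

lemma upsGL_inv : (upsGL : GL (Fin 7) F)⁻¹ = upsGL := rfl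

lemma upsGL_mem_reeGroup : (upsGL : GL (Fin 7) F) ∈ ReeGroup t :=
  Subgroup.subset_closure (Or.inr (Or.inr (Or.inr (Or.inr rfl))))

lemma hmat_one (t : ℕ) : hmat t (1 : Fˣ) = 1 := by
  rw [hmat, ← diagonal_one]
  congr 1
  ext i
  fin_cases i <;> simp

lemma exists_coe_eq_of_isUpperTriangular {n R : Type*} [Fintype n] [LinearOrder n] [CommRing R]
    {M : Matrix n n R} (hM : M.IsUpperTriangular) (hdiag : ∀ i, M i i = 1) :
    ∃ g : GL n R, (g : Matrix n n R) = M := by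
  have hdet : M.det = 1 := by simp only [det_of_isUpperTriangular hM, hdiag, Finset.prod_const_one]
  exact ⟨GeneralLinearGroup.mk'' M (hdet ▸ isUnit_one), rfl⟩

lemma isUpperTriangular_amat (t : ℕ) (x : F) : (amat t x).IsUpperTriangular := fun i j hij => by
  fin_cases i <;> fin_cases j <;> first | rfl | simp at hij

lemma isUpperTriangular_bmat (t : ℕ) (x : F) : (bmat t x).IsUpperTriangular := fun i j hij => by
  fin_cases i <;> fin_cases j <;> first | rfl | simp at hij

lemma isUpperTriangular_cmat (t : ℕ) (x : F) : (cmat t x).IsUpperTriangular := fun i j hij => by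
  fin_cases i <;> fin_cases j <;> first | rfl | simp at hij

lemma exists_mem_Usub_coe_eq_Smat (a b c : F) :
    ∃ u ∈ Usub (F := F) t, (u : Matrix (Fin 7) (Fin 7) F) = Smat t a b c := by
  obtain ⟨x, hx⟩ := exists_coe_eq_of_isUpperTriangular (isUpperTriangular_amat t a)
    fun i => by fin_cases i <;> rfl
  obtain ⟨y, hy⟩ := exists_coe_eq_of_isUpperTriangular (isUpperTriangular_bmat t b)
    fun i => by fin_cases i <;> rfl
  obtain ⟨z, hz⟩ := exists_coe_eq_of_isUpperTriangular (isUpperTriangular_cmat t c)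
    fun i => by fin_cases i <;> rfl
  refine ⟨x * y * z, mul_mem (mul_mem ?_ ?_) ?_, by simp only [Units.val_mul, hx, hy, hz, Smat]⟩
  · exact Subgroup.subset_closure (Or.inl ⟨a, hx⟩)
  · exact Subgroup.subset_closure (Or.inr (Or.inl ⟨b, hy⟩))
  · exact Subgroup.subset_closure (Or.inr (Or.inr ⟨c, hz⟩))

end Subgroups

section ProjectiveAction

variable {F : Type*} [Field F]

lemma ptAct_mk_eq_mk_iff {g : GL (Fin 7) F} {v w : Fin 7 → F} {hv : v ≠ 0} {hw : w ≠ 0} :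
    ptAct g (.mk F v hv) = .mk F w hw ↔ ∃ k : Fˣ, k • w = v ᵥ* (g : Matrix (Fin 7) (Fin 7) F) :=
  Projectivization.mk_eq_mk_iff ..

lemma ptAct_one (P : Projectivization F (Fin 7 → F)) : ptAct 1 P = P := by
  induction P using Projectivization.ind with
  | h v hv => exact ptAct_mk_eq_mk_iff.mpr ⟨1, by simp⟩

lemma ptAct_mul (g h : GL (Fin 7) F) (P : Projectivization F (Fin 7 → F)) :
    ptAct (g * h) P = ptAct h (ptAct g P) := by
  induction P using Projectivization.ind with
  | h v hv => exact ptAct_mk_eq_mk_iff.mpr ⟨1, by simp⟩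

lemma ptAct_inv_eq_iff {g : GL (Fin 7) F} {P Q : Projectivization F (Fin 7 → F)} :
    ptAct g⁻¹ Q = P ↔ ptAct g P = Q := by
  constructor <;> rintro rfl
  · rw [← ptAct_mul, inv_mul_cancel, ptAct_one]
  · rw [← ptAct_mul, mul_inv_cancel, ptAct_one]

/-- The stabilizer of a point for the right action `ptAct`. -/
def ptStabilizer (P : Projectivization F (Fin 7 → F)) : Subgroup (GL (Fin 7) F) where
  carrier := {g | ptAct g P = P}
  one_mem' := ptAct_one P
  mul_mem' {g h} hg hh := (ptAct_mul g h P).trans ((congrArg (ptAct h) hg).trans hh)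
  inv_mem' := ptAct_inv_eq_iff.mpr

lemma mem_ptStabilizer_iff {g : GL (Fin 7) F} {P : Projectivization F (Fin 7 → F)} :
    g ∈ ptStabilizer P ↔ ptAct g P = P := Iff.rfl

lemma mem_ptStabilizer_mk_single_iff {g : GL (Fin 7) F} {i : Fin 7}
    {hi : (Pi.single i 1 : Fin 7 → F) ≠ 0} : g ∈ ptStabilizer (.mk F (Pi.single i 1) hi) ↔
      ∃ k : Fˣ, (g : Matrix (Fin 7) (Fin 7) F).row i = Pi.single i (k : F) := by
  rw [mem_ptStabilizer_iff, ptAct_mk_eq_mk_iff, single_one_vecMul]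
  refine exists_congr fun k => ?_
  rw [← Pi.single_smul, Units.smul_def, smul_eq_mul, mul_one, eq_comm]

variable {t : ℕ}

lemma usub_le_ptStabilizer_Pinf : Usub t ≤ ptStabilizer (Pinf (F := F)) := by
  rw [Usub, Subgroup.closure_le, Pinf_eq_mk_single]
  rintro g (⟨x, hg⟩ | ⟨x, hg⟩ | ⟨x, hg⟩) <;>
    refine mem_ptStabilizer_mk_single_iff.mpr ⟨1, ?_⟩ <;> rw [hg] <;> ext i <;> fin_cases i <;>
    simp [amat, bmat, cmat]

lemma hsub_le_ptStabilizer_mk_single (i : Fin 7) {hi : (Pi.single i 1 : Fin 7 → F) ≠ 0} :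
    Hsub t ≤ ptStabilizer (.mk F (Pi.single i 1) hi) := by
  rw [Hsub, Subgroup.closure_le]
  rintro g ⟨l, hg⟩
  refine mem_ptStabilizer_mk_single_iff.mpr ⟨![l ^ (t : ℤ), l ^ (1 - (t : ℤ)),
    l ^ (2 * (t : ℤ) - 1), 1, l ^ (1 - 2 * (t : ℤ)), l ^ ((t : ℤ) - 1), l ^ (-(t : ℤ))] i, ?_⟩
  rw [hg, hmat, row_diagonal]
  fin_cases i <;> rfl

lemma ptAct_upsGL_Pinf : ptAct upsGL (Pinf (F := F)) = Pzero := by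
  rw [Pinf, Pzero]
  refine ptAct_mk_eq_mk_iff.mpr ⟨-1, ?_⟩
  change _ = _ ᵥ* ups
  rw [vecMul_ups]
  ext i
  fin_cases i <;> simp

lemma exists_mem_Usub_ptAct_Pzero_eq_oPoint (a b c : F) :
    ∃ u ∈ Usub t, ptAct u Pzero = oPoint t a b c := by
  obtain ⟨u, hu, hS⟩ := exists_mem_Usub_coe_eq_Smat (t := t) a b c
  refine ⟨u, hu, ?_⟩
  rw [Pzero_eq_mk_single, oPoint, ptAct_mk_eq_mk_iff]
  exact ⟨1, by rw [hS, single_zero_vecMul_Smat, one_smul]⟩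

end ProjectiveAction

section TwoTransitive

variable {F : Type*} [Field F] [Fintype F]
variable {t : ℕ} {φ : F →+* F} {P Q : Projectivization F (Fin 7 → F)} {g : GL (Fin 7) F}

lemma Pinf_mem_Oset : (Pinf : Projectivization F (Fin 7 → F)) ∈ Oset t := Or.inl rfl

lemma Pzero_ne_Pinf {F : Type*} [Field F] : Pzero (F := F) ≠ Pinf := by
  rw [Pzero, Pinf, Ne, Projectivization.mk_eq_mk_iff']
  rintro ⟨k, hk⟩
  simpa using congrFun hk 0

lemma exists_mem_Usub_ptAct_Pzero_eq (hP : P ∈ Oset t) (hne : P ≠ Pinf) :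
    ∃ u ∈ Usub t, ptAct u Pzero = P := by
  obtain ⟨a, b, c, rfl⟩ := (mem_Oset_iff.mp hP).resolve_left hne
  exact exists_mem_Usub_ptAct_Pzero_eq_oPoint a b c

lemma exists_mem_reeGroup_ptAct_Pinf_eq (hP : P ∈ Oset t) :
    ∃ g ∈ ReeGroup t, ptAct g Pinf = P := by
  by_cases h : P = Pinf
  · exact ⟨1, one_mem _, h ▸ ptAct_one _⟩
  · obtain ⟨u, hu, rfl⟩ := exists_mem_Usub_ptAct_Pzero_eq hP h
    exact ⟨upsGL * u, mul_mem upsGL_mem_reeGroup (usub_le_reeGroup hu),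
      by rw [ptAct_mul, ptAct_upsGL_Pinf]⟩

variable [CharP F 3]

lemma ptAct_mem_Oset (hφ : IsTitsEndo t φ) (hg : g ∈ polarityCentralizer φ) (hP : P ∈ Oset t) :
    ptAct g P ∈ Oset t := by
  induction P using Projectivization.ind with
  | h v hv =>
    exact (mk_mem_Oset_iff hφ _).mpr (((mk_mem_Oset_iff hφ hv).mp hP).vecMul hg)

lemma Pzero_mem_Oset (hφ : IsTitsEndo t φ) : Pzero ∈ Oset (F := F) t := by
  rw [Pzero_eq_mk_single, mk_mem_Oset_iff hφ]
  exact isAbsolute_single_zero φ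

lemma exists_mem_reeGroup_ptAct_pair_eq (hφ : IsTitsEndo t φ) (hP : P ∈ Oset t) (hQ : Q ∈ Oset t)
    (hPQ : P ≠ Q) : ∃ g ∈ ReeGroup t, ptAct g Pinf = P ∧ ptAct g Pzero = Q := by
  obtain ⟨g, hg, rfl⟩ := exists_mem_reeGroup_ptAct_Pinf_eq hP
  have hgQ : ptAct g⁻¹ Q ∈ Oset t :=
    ptAct_mem_Oset hφ (reeGroup_le_polarityCentralizer hφ (inv_mem hg)) hQ
  obtain ⟨u, hu, huQ⟩ := exists_mem_Usub_ptAct_Pzero_eq hgQ (mt ptAct_inv_eq_iff.mp hPQ)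
  refine ⟨u * g, mul_mem (usub_le_reeGroup hu) hg, ?_, ?_⟩
  · rw [ptAct_mul, mem_ptStabilizer_iff.mp (usub_le_ptStabilizer_Pinf hu)]
  · rw [ptAct_mul, huQ, ← ptAct_mul, inv_mul_cancel, ptAct_one]

theorem reeGroup_two_transitive (hφ : IsTitsEndo t φ)
    {P₁ Q₁ P₂ Q₂ : Projectivization F (Fin 7 → F)}
    (hP₁ : P₁ ∈ Oset t) (hQ₁ : Q₁ ∈ Oset t) (hP₂ : P₂ ∈ Oset t) (hQ₂ : Q₂ ∈ Oset t)
    (h₁ : P₁ ≠ Q₁) (h₂ : P₂ ≠ Q₂) : ∃ g ∈ ReeGroup t, ptAct g P₁ = P₂ ∧ ptAct g Q₁ = Q₂ := by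
  obtain ⟨g₁, hg₁, hgP₁, hgQ₁⟩ := exists_mem_reeGroup_ptAct_pair_eq hφ hP₁ hQ₁ h₁
  obtain ⟨g₂, hg₂, hgP₂, hgQ₂⟩ := exists_mem_reeGroup_ptAct_pair_eq hφ hP₂ hQ₂ h₂
  refine ⟨g₁⁻¹ * g₂, mul_mem (inv_mem hg₁) hg₂, ?_, ?_⟩
  · rw [ptAct_mul, ptAct_inv_eq_iff.mpr hgP₁, hgP₂]
  · rw [ptAct_mul, ptAct_inv_eq_iff.mpr hgQ₁, hgQ₂]

end TwoTransitive

section Stabilizers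

variable {F : Type*} [Field F] [CharP F 3]
variable {t : ℕ} {φ : F →+* F} {g : GL (Fin 7) F}

lemma exists_coe_eq_hmat (hφ : IsTitsEndo t φ) (hg : g ∈ polarityCentralizer φ)
    (hinf : g ∈ ptStabilizer Pinf) (hzero : g ∈ ptStabilizer Pzero) :
    ∃ l : Fˣ, (g : Matrix (Fin 7) (Fin 7) F) = hmat t l := by
  rw [Pinf_eq_mk_single, mem_ptStabilizer_mk_single_iff] at hinf
  rw [Pzero_eq_mk_single, mem_ptStabilizer_mk_single_iff] at hzero
  obtain ⟨⟨e, he⟩, ⟨d, hd⟩⟩ := And.intro hinf hzero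
  exact ⟨_, CommutesWithPolarity.eq_hmat hφ hg hd he⟩

theorem reeGroup_inf_ptStabilizer_pair (hφ : IsTitsEndo t φ) :
    ReeGroup (F := F) t ⊓ (ptStabilizer Pinf ⊓ ptStabilizer Pzero) = Hsub t := by
  refine le_antisymm ?_ (le_inf hsub_le_reeGroup (le_inf ?_ ?_))
  · rintro g ⟨hg, hinf, hzero⟩
    exact Subgroup.subset_closure
      (exists_coe_eq_hmat hφ (reeGroup_le_polarityCentralizer hφ hg) hinf hzero)
  · rw [Pinf_eq_mk_single]
    exact hsub_le_ptStabilizer_mk_single 6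
  · rw [Pzero_eq_mk_single]
    exact hsub_le_ptStabilizer_mk_single 0

theorem mem_reeGroup_inf_ptStabilizer_Pinf_iff [Finite F] (hφ : IsTitsEndo t φ) :
    g ∈ ReeGroup t ⊓ ptStabilizer Pinf ↔ ∃ u ∈ Usub t, ∃ h ∈ Hsub t, g = u * h := by
  have := Fintype.ofFinite F
  have hH := reeGroup_inf_ptStabilizer_pair hφ
  constructor
  · rintro ⟨hg, hinf⟩
    have hgO : ptAct g⁻¹ Pzero ∈ Oset t := ptAct_mem_Oset hφ
      (reeGroup_le_polarityCentralizer hφ (inv_mem hg)) (Pzero_mem_Oset hφ)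
    have hne : ptAct g⁻¹ Pzero ≠ Pinf := fun h =>
      Pzero_ne_Pinf ((ptAct_inv_eq_iff.mp h).symm.trans hinf)
    obtain ⟨u, hu, huP⟩ := exists_mem_Usub_ptAct_Pzero_eq hgO hne
    have hzero : u * g ∈ ptStabilizer Pzero := by
      rw [mem_ptStabilizer_iff, ptAct_mul, huP, ← ptAct_mul, inv_mul_cancel, ptAct_one]
    exact ⟨u⁻¹, inv_mem hu, u * g, hH.le ⟨mul_mem (usub_le_reeGroup hu) hg,
      mul_mem (usub_le_ptStabilizer_Pinf hu) hinf, hzero⟩, (inv_mul_cancel_left u g).symm⟩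
  · rintro ⟨u, hu, h, hh, rfl⟩
    obtain ⟨hR, hinf, -⟩ := hH.ge hh
    exact ⟨mul_mem (usub_le_reeGroup hu) hR, mul_mem (usub_le_ptStabilizer_Pinf hu) hinf⟩

lemma mem_reeGroup_inf_ptStabilizer_Pzero_iff {F : Type*} [Field F] {t : ℕ} {g : GL (Fin 7) F} :
    g ∈ ReeGroup t ⊓ ptStabilizer Pzero ↔
      upsGL * g * upsGL ∈ ReeGroup t ⊓ ptStabilizer Pinf := by
  have hmem : upsGL * g * upsGL ∈ ReeGroup t ↔ g ∈ ReeGroup t := by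
    rw [Subgroup.mul_mem_cancel_right _ upsGL_mem_reeGroup,
      Subgroup.mul_mem_cancel_left _ upsGL_mem_reeGroup]
  have hfix : ptAct (upsGL * g * upsGL) Pinf = Pinf ↔ ptAct g Pzero = Pzero := by
    rw [ptAct_mul, ptAct_mul, ptAct_upsGL_Pinf, ← ptAct_inv_eq_iff, upsGL_inv,
      ptAct_upsGL_Pinf, eq_comm]
  rw [Subgroup.mem_inf, Subgroup.mem_inf, mem_ptStabilizer_iff, mem_ptStabilizer_iff, hmem, hfix]

theorem mem_reeGroup_inf_ptStabilizer_Pzero_iff_exists [Finite F] (hφ : IsTitsEndo t φ) :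
    g ∈ ReeGroup t ⊓ ptStabilizer Pzero ↔ ∃ x : GL (Fin 7) F,
      (∃ u ∈ Usub t, ∃ h ∈ Hsub t, x = u * h) ∧
        (g : Matrix (Fin 7) (Fin 7) F) = ups * (x : Matrix (Fin 7) (Fin 7) F) * ups := by
  have hconj (x : GL (Fin 7) F) : (g : Matrix (Fin 7) (Fin 7) F) =
      ups * (x : Matrix (Fin 7) (Fin 7) F) * ups ↔
        x = upsGL * g * upsGL := by
    change (g : Matrix (Fin 7) (Fin 7) F) = (upsGL * x * upsGL : GL (Fin 7) F) ↔ _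
    rw [Units.val_inj, ← mul_inv_eq_iff_eq_mul, ← inv_mul_eq_iff_eq_mul, upsGL_inv, ← mul_assoc,
      eq_comm]
  simp only [mem_reeGroup_inf_ptStabilizer_Pzero_iff, mem_reeGroup_inf_ptStabilizer_Pinf_iff hφ,
    hconj, exists_eq_right]

theorem eq_one_of_forall_ptAct_eq [Fintype F] (hφ : IsTitsEndo t φ) (hg : g ∈ ReeGroup t)
    (hfix : ∀ P ∈ Oset t, ptAct g P = P) : g = 1 := by
  obtain ⟨l, hl⟩ := exists_coe_eq_hmat hφ (reeGroup_le_polarityCentralizer hφ hg)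
    (hfix _ Pinf_mem_Oset) (hfix _ (Pzero_mem_Oset hφ))
  obtain ⟨k, hk⟩ := ptAct_mk_eq_mk_iff.mp (hfix (oPoint t 0 0 1) (Or.inr ⟨0, 0, 1, rfl⟩))
  rw [hl, hmat_eq] at hk
  have h0 : (k : F) = (l : F) ^ t := by
    simpa [oVec, vecMul_diagonal, Units.smul_def] using congrFun hk 0
  have h3 : k = 1 := by
    simpa [oVec, vecMul_diagonal, hφ.ne_zero, Units.smul_def] using congrFun hk 3
  have hl1 : (l : F) = 1 := by rw [← hφ.apply_pow l, ← h0, h3, Units.val_one, map_one]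
  have : l = 1 := Units.ext hl1
  rw [this, hmat_one] at hl
  exact Units.ext hl

end Stabilizers

section Cardinality

variable {F : Type*} [Field F] {t : ℕ} {φ : F →+* F}

lemma oPoint_injective (hφ : IsTitsEndo t φ) :
    Function.Injective fun x : F × F × F => oPoint t x.1 x.2.1 x.2.2 := by
  rintro ⟨a, b, c⟩ ⟨a', b', c'⟩ h
  obtain ⟨k, hk⟩ := (Projectivization.mk_eq_mk_iff' ..).mp h
  have pow_injective : Function.Injective (· ^ t : F → F) :=
    Function.LeftInverse.injective hφ.apply_pow
  have hk1 : k = 1 := by simpa [oVec] using congrFun hk 0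
  rw [hk1, one_smul] at hk
  obtain rfl : a' = a := pow_injective (congrFun hk 1)
  obtain rfl : b' = b := pow_injective (neg_injective (congrFun hk 2))
  obtain rfl : c' = c := pow_injective (sub_right_injective (congrFun hk 3))
  rfl

lemma oPoint_ne_Pinf (a b c : F) : oPoint t a b c ≠ Pinf := by
  rw [oPoint, Pinf, Ne, Projectivization.mk_eq_mk_iff']
  rintro ⟨k, hk⟩
  simpa [oVec] using congrFun hk 0

theorem ncard_Oset [Fintype F] (hφ : IsTitsEndo t φ) :
    (Oset (F := F) t).ncard = Fintype.card F ^ 3 + 1 := by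
  have hO : Oset t = insert Pinf (Set.range fun x : F × F × F => oPoint t x.1 x.2.1 x.2.2) := by
    ext P
    simp [mem_Oset_iff, eq_comm]
  rw [hO, Set.ncard_insert_of_notMem, ← Set.image_univ,
    Set.ncard_image_of_injective _ (oPoint_injective hφ), Set.ncard_univ]
  · simp only [Nat.card_eq_fintype_card, Fintype.card_prod]
    ring
  · rintro ⟨x, hx⟩
    exact oPoint_ne_Pinf _ _ _ hx

end Cardinality

lemma exists_isTitsEndo {F : Type*} [Field F] [Fintype F] [CharP F 3] {m : ℕ}
    (hF : Fintype.card F = 3 ^ (2 * m + 1)) : ∃ φ : F →+* F, IsTitsEndo (3 ^ m) φ := by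
  have hq (x : F) : x ^ 3 ^ (2 * m + 1) = x := hF ▸ FiniteField.pow_card x
  refine ⟨iterateFrobenius F 3 (m + 1), fun x => ?_, fun x => ?_⟩
  · rw [iterateFrobenius_def, ← pow_mul, pow_succ]
  · rw [iterateFrobenius_def, ← pow_mul, ← pow_add, ← add_assoc, ← two_mul, hq]

end ReePaper

/-- `|O| = q^3 + 1`; `O` is invariant under `Ree(q)`; `Ree(q)` acts faithfully and doubly
transitively on `O`; the stabilizer of `P∞` is `U(q)H(q)`, the stabilizer of `P₀` is
`(U(q)H(q))^Υ`, and the stabilizer of the pair `(P∞, P₀)` is `H(q)`. -/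
theorem ovoid_action (m : ℕ) (hm : 0 < m) (F : Type*) [Field F] [Fintype F]
    (hF : Fintype.card F = 3 ^ (2 * m + 1)) :
    (Oset (F := F) (3 ^ m)).ncard = (3 ^ (2 * m + 1)) ^ 3 + 1 ∧
    (∀ g ∈ ReeGroup (F := F) (3 ^ m), ∀ P ∈ Oset (F := F) (3 ^ m),
      ptAct g P ∈ Oset (F := F) (3 ^ m)) ∧
    (∀ g ∈ ReeGroup (F := F) (3 ^ m),
      (∀ P ∈ Oset (F := F) (3 ^ m), ptAct g P = P) → g = 1) ∧
    (∀ P₁ Q₁ P₂ Q₂ : Projectivization F (Fin 7 → F),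
      P₁ ∈ Oset (F := F) (3 ^ m) → Q₁ ∈ Oset (F := F) (3 ^ m) →
      P₂ ∈ Oset (F := F) (3 ^ m) → Q₂ ∈ Oset (F := F) (3 ^ m) →
      P₁ ≠ Q₁ → P₂ ≠ Q₂ →
      ∃ g ∈ ReeGroup (F := F) (3 ^ m), ptAct g P₁ = P₂ ∧ ptAct g Q₁ = Q₂) ∧
    {g : GL (Fin 7) F | g ∈ ReeGroup (F := F) (3 ^ m) ∧ ptAct g Pinf = Pinf} =
      {g : GL (Fin 7) F |
        ∃ u ∈ Usub (F := F) (3 ^ m), ∃ h ∈ Hsub (F := F) (3 ^ m), g = u * h} ∧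
    {g : GL (Fin 7) F | g ∈ ReeGroup (F := F) (3 ^ m) ∧ ptAct g Pzero = Pzero} =
      {g : GL (Fin 7) F | ∃ x : GL (Fin 7) F,
        (∃ u ∈ Usub (F := F) (3 ^ m), ∃ h ∈ Hsub (F := F) (3 ^ m), x = u * h) ∧
        (g : Matrix (Fin 7) (Fin 7) F) = ups * (x : Matrix (Fin 7) (Fin 7) F) * ups} ∧
    {g : GL (Fin 7) F | g ∈ ReeGroup (F := F) (3 ^ m) ∧
        ptAct g Pinf = Pinf ∧ ptAct g Pzero = Pzero} =
      (Hsub (F := F) (3 ^ m) : Set (GL (Fin 7) F)) := by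
  have : CharP F 3 := charP_of_card_eq_prime_pow hF
  obtain ⟨φ, hφ⟩ := exists_isTitsEndo hF
  refine ⟨?card, ?invariant, ?faithful, ?two_transitive, ?stab_Pinf, ?stab_Pzero, ?stab_pair⟩
  case card => rw [ncard_Oset hφ, hF]
  case invariant => exact fun g hg P => ptAct_mem_Oset hφ (reeGroup_le_polarityCentralizer hφ hg)
  case faithful => exact fun g => eq_one_of_forall_ptAct_eq hφ
  case two_transitive => exact fun P₁ Q₁ P₂ Q₂ => reeGroup_two_transitive hφ
  case stab_Pinf => exact Set.ext fun g => mem_reeGroup_inf_ptStabilizer_Pinf_iff hφ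
  case stab_Pzero => exact Set.ext fun g => mem_reeGroup_inf_ptStabilizer_Pzero_iff_exists hφ
  case stab_pair => exact congrArg SetLike.coe (reeGroup_inf_ptStabilizer_pair hφ)
end
end

section
/- Let F be a finite field, let d be an odd positive integer, let G ≤ GL(d, F) be a subgroup preserving a non-degenerate bilinear form B on F^d (that is, B(u·g, v·g) = B(u, v) for all g ∈ G and all u, v ∈ F^d), and let g ∈ G with det(g) = 1. Then 1 is an eigenvalue of g. -/
open Matrix

/-!
If `J` is the Gram matrix of the form, then `Aᵀ * J * A = J` says that `J` intertwines `Aᵀ` and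
`A⁻¹`, so `A` and `A⁻¹` have the same characteristic polynomial `p`. For `det A = 1` in odd
dimension this means that `p` is anti-palindromic of odd degree. Its coefficients then cancel in
pairs, with no middle coefficient left over, so `p 1 = 0` even in characteristic two.
-/

theorem eval_one_eq_zero_of_reverse_eq_neg {R : Type*} [Ring R] {p : Polynomial R}
    (hp : p.reverse = -p) (hodd : Odd p.natDegree) : p.eval 1 = 0 := by
  have coeff_sub {i : ℕ} (hi : i ≤ p.natDegree) : p.coeff (p.natDegree - i) = -p.coeff i := by
    rw [← Polynomial.revAt_le hi, ← Polynomial.coeff_reverse, hp, Polynomial.coeff_neg]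
  have le_of_mem {i : ℕ} (hi : i ∈ Finset.range (p.natDegree + 1)) : i ≤ p.natDegree :=
    Finset.mem_range_succ_iff.mp hi
  simp only [Polynomial.eval_eq_sum_range, one_pow, mul_one]
  refine Finset.sum_involution (fun i _ ↦ p.natDegree - i) ?cancel ?ne ?mem ?invol
  case cancel => exact fun i hi ↦ by rw [coeff_sub (le_of_mem hi), add_neg_cancel]
  case ne => exact fun i hi _ ↦ by have := le_of_mem hi; grind
  case mem => exact fun i _ ↦ Finset.mem_range_succ_iff.mpr (Nat.sub_le _ i)
  case invol => exact fun i hi ↦ Nat.sub_sub_self (le_of_mem hi)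

section Matrix

variable {R n : Type*} [CommRing R] [Fintype n] [DecidableEq n] {A J : Matrix n n R}

theorem charpoly_eq_of_mul_eq_mul {A' : Matrix n n R} (hJ : J.det ∈ nonZeroDivisors R)
    (h : A * J = J * A') : A.charpoly = A'.charpoly := by
  have charmatrix_mul : A.charmatrix * J.map Polynomial.C = J.map Polynomial.C * A'.charmatrix := by
    simp only [charmatrix, RingHom.mapMatrix_apply, sub_mul, mul_sub, ← Matrix.map_mul, h]
    rw [scalar_commute _ (Commute.all _)]
  have det_mem : (J.map Polynomial.C).det ∈ nonZeroDivisors (Polynomial R) := by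
    rw [← RingHom.mapMatrix_apply, ← RingHom.map_det]
    exact Polynomial.mem_nonZeroDivisors_of_leadingCoeff (by rwa [Polynomial.leadingCoeff_C])
  have det_eq := congrArg det charmatrix_mul
  rw [det_mul, det_mul, mul_comm] at det_eq
  exact (mul_cancel_left_mem_nonZeroDivisors det_mem).mp det_eq

theorem det_mul_det_eq_one_of_transpose_mul_mul_eq (hJ : J.det ∈ nonZeroDivisors R)
    (h : Aᵀ * J * A = J) : A.det * A.det = 1 := by
  refine (mul_cancel_left_mem_nonZeroDivisors hJ).mp ?_
  conv_rhs => rw [← h]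
  simp only [det_mul, det_transpose]
  ring

theorem charpoly_inv_of_transpose_mul_mul_eq (hJ : J.det ∈ nonZeroDivisors R)
    (h : Aᵀ * J * A = J) : A⁻¹.charpoly = A.charpoly := by
  have hA : IsUnit A.det := .of_mul_eq_one _ (det_mul_det_eq_one_of_transpose_mul_mul_eq hJ h)
  have intertwines : Aᵀ * J = J * A⁻¹ := by
    conv_rhs => rw [← h, mul_nonsing_inv_cancel_right _ _ hA]
  rw [← charpoly_eq_of_mul_eq_mul hJ intertwines, charpoly_transpose]

theorem charpoly_eval_one_eq_zero_of_transpose_mul_mul_eq (hJ : J.det ∈ nonZeroDivisors R)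
    (h : Aᵀ * J * A = J) (hdet : A.det = 1) (hodd : Odd (Fintype.card n)) :
    A.charpoly.eval 1 = 0 := by
  nontriviality R
  have hA : IsUnit A := A.isUnit_iff_isUnit_det.mpr (hdet ▸ isUnit_one)
  refine eval_one_eq_zero_of_reverse_eq_neg ?_ (by rwa [charpoly_natDegree_eq_dim])
  calc A.charpoly.reverse = A.charpolyRev := reverse_charpoly A
    _ = -A⁻¹.charpoly := by simp [charpoly_inv A hA, hdet, hodd.neg_one_pow]
    _ = -A.charpoly := by rw [charpoly_inv_of_transpose_mul_mul_eq hJ h]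

end Matrix

theorem eigenvalue_one_of_det_one_general {R M : Type*} [CommRing R] [IsDomain R]
    [AddCommGroup M] [Module R M] [Module.Free R M] [Module.Finite R M]
    {B : LinearMap.BilinForm R M} (hB : B.SeparatingLeft) {f : Module.End R M}
    (hf : ∀ u v, B (f u) (f v) = B u v) (hdet : LinearMap.det f = 1)
    (hodd : Odd (Module.finrank R M)) : f.HasEigenvalue 1 := by
  let b := Module.Free.chooseBasis R M
  have gram_det : (LinearMap.toMatrix₂ b b B).det ∈ nonZeroDivisors R :=
    mem_nonZeroDivisors_of_ne_zero ((LinearMap.separatingLeft_iff_det_ne_zero b).mp hB)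
  have gram_invariant : (LinearMap.toMatrix b b f)ᵀ * LinearMap.toMatrix₂ b b B *
      LinearMap.toMatrix b b f = LinearMap.toMatrix₂ b b B := by
    rw [← LinearMap.toMatrix₂_compl₁₂, show B.compl₁₂ f f = B from LinearMap.ext₂ hf]
  rw [Module.End.hasEigenvalue_iff_isRoot_charpoly, ← LinearMap.charpoly_toMatrix f b]
  exact charpoly_eval_one_eq_zero_of_transpose_mul_mul_eq gram_det gram_invariant
    (by rwa [LinearMap.det_toMatrix]) (by rwa [← Module.finrank_eq_card_chooseBasisIndex])

/-- If `G ≤ GL(d, F)` with `d` odd preserves a non-degenerate bilinear form and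
`g ∈ G` has determinant 1, then 1 is an eigenvalue of `g`. -/
theorem eigenvalue_one_of_det_one (F : Type*) [Field F] [Fintype F]
    (d : ℕ) (hd0 : 0 < d) (hd : Odd d)
    (B : (Fin d → F) →ₗ[F] (Fin d → F) →ₗ[F] F)
    (hB : ∀ v : Fin d → F, (∀ w : Fin d → F, B v w = 0) → v = 0)
    (G : Subgroup (GL (Fin d) F))
    (hG : ∀ g ∈ G, ∀ u v : Fin d → F,
      B (u ᵥ* (g : Matrix (Fin d) (Fin d) F)) (v ᵥ* (g : Matrix (Fin d) (Fin d) F)) = B u v)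
    (g : GL (Fin d) F) (hg : g ∈ G)
    (hdet : (g : Matrix (Fin d) (Fin d) F).det = 1) :
    ∃ v : Fin d → F, v ≠ 0 ∧ v ᵥ* (g : Matrix (Fin d) (Fin d) F) = v := by
  obtain ⟨v, hv⟩ := (eigenvalue_one_of_det_one_general hB (f := toLin' (g : Matrix _ _ F)ᵀ)
    (by simpa [mulVec_transpose] using hG g hg) (by simpa) (by simpa)).exists_hasEigenvector
  exact ⟨v, hv.2, by simpa [mulVec_transpose] using hv.apply_eq_smul⟩
end
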